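/- If q ≥ ns + Σ_{t=1}^{s+1} C(s+1,t)·s·t·(t−1)/2, then there exist ns pairwise distinct elements λ_0, …, λ_{ns−1} ∈ F_q satisfying the local constraints, i.e., det(A_{a,B}) ≠ 0 for every a ∈ {0,…,n/(s+1)−1} and every nonempty subset B ⊆ {0,…,s}. -/

import Mathlib

open Matrix

/-- The `u`-th digit of `i` in base `s`. -/
def digit (s i u : ℕ) : ℕ := i / s ^ u % s

open scoped Classical in
/-- The `z`-th entry of the `(i,j)` block (a length-`t` column vector, `0 ≤ z < t`) of the
block matrix `A_{a,b}^{(t)}`; the group size is `g` (`g = s` for the first construction and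
`g = s + 1` for the second), so the relevant `λ`-index is `a·s·g + b·s + j_a`. -/
noncomputable def Aent {F : Type*} [Field F] (lam : ℕ → F) (s g a b i j z : ℕ) : F :=
  if i = j then lam (a * s * g + b * s + digit s j a) ^ z
  else if digit s i a = b ∧ digit s j a ≠ b ∧ (∀ u, u ≠ a → digit s i u = digit s j u) then
    -(lam (a * s * g + b * s + digit s j a) ^ z)
  else 0

/-- `A_{a,b}^{(t)}` as an `ℓt × ℓ` matrix; row `ρ` encodes block row `ρ / t` and
inner row `ρ % t`. -/
noncomputable def Amat {F : Type*} [Field F] (lam : ℕ → F) (s g ℓ a b t : ℕ) :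
    Matrix (Fin (ℓ * t)) (Fin ℓ) F :=
  Matrix.of fun ρ j => Aent lam s g a b ((ρ : ℕ) / t) (j : ℕ) ((ρ : ℕ) % t)

/-- The `m`-th smallest element of the finite set `B ⊆ ℕ` (junk value `0` if `m ≥ |B|`). -/
def enum (B : Finset ℕ) (m : ℕ) : ℕ := (B.sort (· ≤ ·)).getD m 0

/-- `A_{a,B}^{(t)} = [A_{a,b₁}^{(t)} | ⋯ | A_{a,b_v}^{(t)}]` as an `ℓt × ℓ|B|` matrix:
row `ρ` encodes block row `ρ / t` and inner row `ρ % t`; column `κ` selects the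
`κ / ℓ`-th member of `B` and inner column `κ % ℓ`. -/
noncomputable def AmatB {F : Type*} [Field F] (lam : ℕ → F) (s g ℓ a t : ℕ) (B : Finset ℕ) :
    Matrix (Fin (ℓ * t)) (Fin (ℓ * B.card)) F :=
  Matrix.of fun ρ κ =>
    Aent lam s g a (enum B ((κ : ℕ) / ℓ)) ((ρ : ℕ) / t) ((κ : ℕ) % ℓ) ((ρ : ℕ) % t)

/-- The local (in-group) constraints: every square matrix `A_{a,B}` (for a group index
`a < groups` and a nonempty `B ⊆ {0, …, g-1}`) is invertible. -/
def LocalConstraints {F : Type*} [Field F] (lam : ℕ → F) (s g ℓ groups : ℕ) : Prop :=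
  ∀ a < groups, ∀ B ⊆ Finset.range g, B.Nonempty → (AmatB lam s g ℓ a B.card B).det ≠ 0

/-! ### Digits -/

lemma mod_eq_of_digits (s i j a : ℕ) (h : ∀ u < a, digit s i u = digit s j u) :
    i % s ^ a = j % s ^ a := by
  induction a with
  | zero => simp [Nat.mod_one]
  | succ a ih =>
    have h1 := h a (Nat.lt_succ_self a)
    unfold digit at h1
    rw [Nat.mod_pow_succ, Nat.mod_pow_succ, ih (fun u hu => h u (by omega)), h1]

lemma eq_of_digits (s i j : ℕ) (hs : 2 ≤ s) (h : ∀ u, digit s i u = digit s j u) : i = j := by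
  have h1 := mod_eq_of_digits s i j (i + j) (fun u _ => h u)
  have h2 : i + j < s ^ (i + j) := Nat.lt_pow_self (by omega)
  rwa [Nat.mod_eq_of_lt (by omega), Nat.mod_eq_of_lt (by omega)] at h1

lemma digit_div (s i a u : ℕ) : digit s (i / s ^ a) u = digit s i (a + u) := by
  unfold digit
  rw [Nat.div_div_eq_div_mul, pow_add]

lemma digit_of_mod (s i u : ℕ) : digit s i u = i % s ^ (u + 1) / s ^ u := by
  unfold digit
  rw [pow_succ, Nat.mod_mul_right_div_self]

/-- Replace the `a`-th digit of `j` by `e`. -/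
def repl (s a j e : ℕ) : ℕ := (j / s ^ (a + 1)) * s ^ (a + 1) + (e * s ^ a + j % s ^ a)

lemma repl_aux (s a j e : ℕ) (hs : 2 ≤ s) (he : e < s) :
    e * s ^ a + j % s ^ a < s ^ (a + 1) := by
  have h1 : j % s ^ a < s ^ a := Nat.mod_lt _ (by positivity)
  have h2 : (e + 1) * s ^ a ≤ s * s ^ a := Nat.mul_le_mul_right _ he
  rw [pow_succ]
  nlinarith

lemma repl_div (s a j e : ℕ) (hs : 2 ≤ s) (he : e < s) :
    repl s a j e / s ^ (a + 1) = j / s ^ (a + 1) := by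
  unfold repl
  rw [add_comm, Nat.add_mul_div_right _ _ (by positivity),
    Nat.div_eq_of_lt (repl_aux s a j e hs he), zero_add]

lemma repl_mod (s a j e : ℕ) : repl s a j e % s ^ a = j % s ^ a := by
  unfold repl
  have : (j / s ^ (a + 1)) * s ^ (a + 1) + (e * s ^ a + j % s ^ a)
      = j % s ^ a + s ^ a * ((j / s ^ (a + 1)) * s + e) := by
    rw [pow_succ]; ring
  rw [this, Nat.add_mul_mod_self_left, Nat.mod_mod]

lemma repl_digit_self (s a j e : ℕ) (hs : 2 ≤ s) (he : e < s) :
    digit s (repl s a j e) a = e := by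
  unfold digit repl
  have : (j / s ^ (a + 1)) * s ^ (a + 1) + (e * s ^ a + j % s ^ a)
      = j % s ^ a + s ^ a * (e + s * (j / s ^ (a + 1))) := by
    rw [pow_succ]; ring
  rw [this, Nat.add_mul_div_left _ _ (by positivity),
    Nat.div_eq_of_lt (Nat.mod_lt _ (by positivity)), zero_add, Nat.add_mul_mod_self_left,
    Nat.mod_eq_of_lt he]

lemma repl_digit_ne (s a j e u : ℕ) (hs : 2 ≤ s) (he : e < s) (hu : u ≠ a) :
    digit s (repl s a j e) u = digit s j u := by
  rcases lt_or_gt_of_ne hu with h | h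
  · have hd : s ^ (u + 1) ∣ s ^ a := pow_dvd_pow _ h
    rw [digit_of_mod, digit_of_mod, ← Nat.mod_mod_of_dvd _ hd, repl_mod, Nat.mod_mod_of_dvd _ hd]
  · obtain ⟨v, rfl⟩ := Nat.exists_eq_add_of_lt h
    rw [show a + v + 1 = (a + 1) + v by ring, ← digit_div, repl_div s a j e hs he, digit_div]

lemma eq_repl (s a j i : ℕ) (hs : 2 ≤ s) (h : ∀ u, u ≠ a → digit s i u = digit s j u) :
    i = repl s a j (digit s i a) := by
  apply eq_of_digits s _ _ hs
  have hlt : digit s i a < s := Nat.mod_lt _ (by omega)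
  intro u
  by_cases hu : u = a
  · subst hu; rw [repl_digit_self s u j _ hs hlt]
  · rw [repl_digit_ne s a j _ u hs hlt hu, h u hu]

lemma repl_lt (s a j e N : ℕ) (hs : 2 ≤ s) (he : e < s) (ha : a < N) (hj : j < s ^ N) :
    repl s a j e < s ^ N := by
  have hN : s ^ N = s ^ (N - (a + 1)) * s ^ (a + 1) := by rw [← pow_add]; congr 1; omega
  rw [hN, ← Nat.div_lt_iff_lt_mul (by positivity), repl_div s a j e hs he,
    Nat.div_lt_iff_lt_mul (by positivity), ← hN]
  exact hj

/-! ### The small matrix -/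

/-- The kernel coefficient. -/
def kcoef (R : Type*) [CommRing R] (b i j : ℕ) : R :=
  if i = j then 1 else if i = b then -1 else 0

/-- The small `st × st` matrix. -/
def Sm {R : Type*} [CommRing R] (w : ℕ → ℕ → R) (s t : ℕ) (β : ℕ → ℕ) :
    Matrix (Fin s × Fin t) (Fin s × Fin t) R :=
  Matrix.of fun r c => kcoef R (β c.2) r.1 c.1 * w (β c.2) c.1 ^ (r.2 : ℕ)

lemma Sm_map {R S : Type*} [CommRing R] [CommRing S] (f : R →+* S) (w : ℕ → ℕ → R) (s t : ℕ)
    (β : ℕ → ℕ) : f (Sm w s t β).det = (Sm (fun b j => f (w b j)) s t β).det := by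
  rw [RingHom.map_det]
  congr 1
  ext r c
  simp only [Sm, kcoef, RingHom.mapMatrix_apply, Matrix.map_apply, Matrix.of_apply, map_mul,
    map_pow]
  congr 1
  split_ifs <;> simp

lemma Sm_det_ne_zero {F : Type*} [Field F] (μ : ℕ → F) (s t : ℕ) (β : ℕ → ℕ)
    (hinj : Function.Injective fun c : Fin t => μ (β c)) :
    (Sm (fun b _ => μ b) s t β).det ≠ 0 := by
  intro hdet
  obtain ⟨v, hv, h⟩ := Matrix.exists_mulVec_eq_zero_iff.mpr hdet
  apply hv
  have key : ∀ (i : Fin s) (c : Fin t), ∑ j : Fin s, kcoef F (β c) i j * v (j, c) = 0 := by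
    intro i
    have := Matrix.eq_zero_of_forall_pow_sum_mul_pow_eq_zero
      (v := fun c : Fin t => ∑ j : Fin s, kcoef F (β c) i j * v (j, c)) hinj ?_
    · intro c
      exact congrFun this c
    · intro z
      have h2 := congrFun h (i, z)
      simp only [Matrix.mulVec, dotProduct, Sm, Matrix.of_apply, Fintype.sum_prod_type_right,
        Pi.zero_apply] at h2
      rw [← h2]
      apply Finset.sum_congr rfl
      intro c _
      rw [Finset.sum_mul]
      apply Finset.sum_congr rfl
      intro j _
      ring
  have h1 : ∀ (i : Fin s) (c : Fin t), (i : ℕ) ≠ β c → v (i, c) = 0 := by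
    intro i c hic
    rw [← key i c, Finset.sum_eq_single i]
    · simp [kcoef]
    · intro j _ hj
      have : (i : ℕ) ≠ j := fun h => hj (Fin.ext h.symm)
      simp [kcoef, this, hic]
    · simp
  funext ⟨i, c⟩
  by_cases hic : (i : ℕ) = β c
  · rw [Pi.zero_apply, ← key i c, Finset.sum_eq_single i]
    · simp [kcoef]
    · intro j _ hj
      have : (j : ℕ) ≠ β c := fun h => hj (Fin.ext (by omega))
      rw [h1 j c this, mul_zero]
    · simp
  · exact h1 i c hic

/-- Invertibility of the small matrix implies that of the big one. -/
lemma big_of_small {F : Type*} [Field F] (lam : ℕ → F) (s g a N ℓ : ℕ) (B : Finset ℕ)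
    (hs : 2 ≤ s) (ha : a < N) (hℓ : ℓ = s ^ N)
    (h : (Sm (fun b j => lam (a * s * g + b * s + j)) s B.card (enum B)).det ≠ 0) :
    (AmatB lam s g ℓ a B.card B).det ≠ 0 := by
  intro hdet
  apply h
  obtain ⟨v, hv, hAv⟩ := Matrix.exists_mulVec_eq_zero_iff.mpr hdet
  obtain ⟨κ₀, hκ₀⟩ := Function.ne_iff.mp hv
  rw [← Matrix.exists_mulVec_eq_zero_iff]
  have hℓ0 : 0 < ℓ := by rw [hℓ]; positivity
  set j₀ := (κ₀ : ℕ) % ℓ with hj₀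
  have hj₀lt : j₀ < ℓ := Nat.mod_lt _ hℓ0
  have hm : ∀ e, e < s → repl s a j₀ e < ℓ := by
    intro e he
    rw [hℓ] at hj₀lt ⊢
    exact repl_lt s a j₀ e N hs he ha hj₀lt
  have hcol : ∀ p : Fin s × Fin B.card, (p.2 : ℕ) * ℓ + repl s a j₀ p.1 < ℓ * B.card := by
    intro p
    have h1 := hm p.1 p.1.2
    have h2 : ((p.2 : ℕ) + 1) * ℓ ≤ B.card * ℓ := Nat.mul_le_mul_right _ p.2.2
    nlinarith
  have hcdiv : ∀ p : Fin s × Fin B.card, ((p.2 : ℕ) * ℓ + repl s a j₀ p.1) / ℓ = p.2 := by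
    intro p
    rw [add_comm, Nat.add_mul_div_right _ _ hℓ0, Nat.div_eq_of_lt (hm p.1 p.1.2), zero_add]
  have hcmod : ∀ p : Fin s × Fin B.card,
      ((p.2 : ℕ) * ℓ + repl s a j₀ p.1) % ℓ = repl s a j₀ p.1 := by
    intro p
    rw [add_comm, Nat.add_mul_mod_self_right, Nat.mod_eq_of_lt (hm p.1 p.1.2)]
  have hrinj : ∀ e e' : Fin s, repl s a j₀ e = repl s a j₀ e' → e = e' := by
    intro e e' hee
    have := congrArg (fun x => digit s x a) hee
    simp only [repl_digit_self s a j₀ _ hs e.2, repl_digit_self s a j₀ _ hs e'.2] at this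
    exact Fin.ext this
  let col : Fin s × Fin B.card → Fin (ℓ * B.card) := fun p => ⟨(p.2 : ℕ) * ℓ + repl s a j₀ p.1, hcol p⟩
  have hcolinj : Function.Injective col := by
    intro p p' hpp
    have h0 : (p.2 : ℕ) * ℓ + repl s a j₀ p.1 = (p'.2 : ℕ) * ℓ + repl s a j₀ p'.1 :=
      congrArg Fin.val hpp
    have h1 : (p.2 : ℕ) = p'.2 := by rw [← hcdiv p, h0, hcdiv p']
    have h2 : repl s a j₀ p.1 = repl s a j₀ p'.1 := by rw [← hcmod p, h0, hcmod p']
    exact Prod.ext (hrinj _ _ h2) (Fin.ext h1)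
  have hrange : ∀ κ : Fin (ℓ * B.card),
      (∀ u, u ≠ a → digit s ((κ : ℕ) % ℓ) u = digit s j₀ u) → κ ∈ Set.range col := by
    intro κ hκ
    have hdlt : digit s ((κ : ℕ) % ℓ) a < s := Nat.mod_lt _ (by omega)
    have hc : (κ : ℕ) / ℓ < B.card := by
      have h7 := κ.2
      rw [Nat.div_lt_iff_lt_mul hℓ0]
      linarith [mul_comm ℓ B.card]
    refine ⟨(⟨_, hdlt⟩, ⟨_, hc⟩), ?_⟩
    apply Fin.ext
    change (κ : ℕ) / ℓ * ℓ + repl s a j₀ (digit s ((κ : ℕ) % ℓ) a) = κ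
    rw [← eq_repl s a j₀ _ hs hκ, Nat.div_add_mod']
  refine ⟨fun p => v (col p), ?_, ?_⟩
  · obtain ⟨p, hp⟩ := hrange κ₀ (fun u _ => rfl)
    intro h0
    apply hκ₀
    rw [← hp]
    exact congrFun h0 p
  · funext ⟨e, z⟩
    have ht0 : 0 < B.card := lt_of_le_of_lt (Nat.zero_le _) z.2
    have hrow : repl s a j₀ e * B.card + (z : ℕ) < ℓ * B.card := by
      have h1 := hm e e.2
      have h2 : (repl s a j₀ e + 1) * B.card ≤ ℓ * B.card := Nat.mul_le_mul_right _ h1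
      have h3 := z.2
      nlinarith
    have hrdiv : (repl s a j₀ e * B.card + (z : ℕ)) / B.card = repl s a j₀ e := by
      rw [add_comm, Nat.add_mul_div_right _ _ ht0, Nat.div_eq_of_lt z.2, zero_add]
    have hrmod : (repl s a j₀ e * B.card + (z : ℕ)) % B.card = z := by
      rw [add_comm, Nat.add_mul_mod_self_right, Nat.mod_eq_of_lt z.2]
    have hA := congrFun hAv ⟨repl s a j₀ e * B.card + (z : ℕ), hrow⟩
    simp only [Matrix.mulVec, dotProduct, AmatB, Matrix.of_apply, Pi.zero_apply, hrdiv,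
      hrmod] at hA
    rw [Pi.zero_apply, ← hA]
    simp only [Matrix.mulVec, dotProduct]
    apply Fintype.sum_of_injective col hcolinj
    · intro κ hκ
      have hne : ¬ ∀ u, u ≠ a → digit s ((κ : ℕ) % ℓ) u = digit s j₀ u :=
        fun hh => hκ (hrange κ hh)
      have h1 : repl s a j₀ e ≠ (κ : ℕ) % ℓ := by
        intro h1
        apply hne
        intro u hu
        rw [← h1, repl_digit_ne s a j₀ e u hs e.2 hu]
      have h2 : ¬ ∀ u, u ≠ a → digit s (repl s a j₀ e) u = digit s ((κ : ℕ) % ℓ) u := by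
        intro h2
        apply hne
        intro u hu
        rw [← h2 u hu, repl_digit_ne s a j₀ e u hs e.2 hu]
      simp [Aent, h1, h2]
    · intro p
      congr 1
      have e1 : ((col p : Fin (ℓ * B.card)) : ℕ) / ℓ = p.2 := hcdiv p
      have e2 : ((col p : Fin (ℓ * B.card)) : ℕ) % ℓ = repl s a j₀ p.1 := hcmod p
      rw [e1, e2]
      have h3 : ∀ u, u ≠ a → digit s (repl s a j₀ e) u = digit s (repl s a j₀ p.1) u := by
        intro u hu
        rw [repl_digit_ne s a j₀ e u hs e.2 hu, repl_digit_ne s a j₀ p.1 u hs p.1.2 hu]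
      simp only [Sm, kcoef, Aent, Matrix.of_apply, repl_digit_self s a j₀ _ hs e.2,
        repl_digit_self s a j₀ _ hs p.1.2]
      by_cases hep : e = p.1
      · simp [hep]
      · have h4 : repl s a j₀ e ≠ repl s a j₀ p.1 := fun hh => hep (hrinj _ _ hh)
        have h5 : (e : ℕ) ≠ p.1 := fun hh => hep (Fin.ext hh)
        have hde := repl_digit_self s a j₀ e hs e.2
        have hdp := repl_digit_self s a j₀ p.1 hs p.1.2
        rw [if_neg h5, if_neg h4]
        by_cases h6 : (e : ℕ) = enum B p.2
        · rw [if_pos h6, if_pos ⟨hde.trans h6, fun hh => h5 (h6.trans (hdp.symm.trans hh).symm), h3⟩]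
          ring
        · rw [if_neg h6, if_neg (fun hh => h6 (hde.symm.trans hh.1))]
          ring

/-! ### Degrees -/

lemma degreeOf_det_le {σ ι R : Type*} [CommRing R] [Fintype ι] [DecidableEq ι]
    (M : Matrix ι ι (MvPolynomial σ R)) (p : σ) (D : ℕ)
    (h : ∀ π : Equiv.Perm ι, ∑ i, (M (π i) i).degreeOf p ≤ D) : M.det.degreeOf p ≤ D := by
  rw [Matrix.det_apply]
  refine (MvPolynomial.degreeOf_sum_le _ _ _).trans (Finset.sup_le fun π _ => ?_)
  have h1 : (∏ i, M (π i) i).degreeOf p ≤ D := (MvPolynomial.degreeOf_prod_le _ _ _).trans (h π)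
  rcases Int.units_eq_one_or (Equiv.Perm.sign π) with h2 | h2 <;> rw [h2]
  · simpa using h1
  · simpa [MvPolynomial.degreeOf_neg] using h1

lemma degreeOf_Sm_le {σ F : Type*} [Field F] (w : ℕ → ℕ → MvPolynomial σ F) (s t : ℕ)
    (β : ℕ → ℕ) (p : σ) (δ : ℕ)
    (hw : ∀ (j : Fin s) (c : Fin t), (w (β c) j).degreeOf p ≤ δ) :
    (Sm w s t β).det.degreeOf p ≤ δ * (s * t * (t - 1) / 2) := by
  apply degreeOf_det_le
  intro π
  have h1 : ∀ c : Fin s × Fin t, ((Sm w s t β) (π c) c).degreeOf p ≤ δ * ((π c).2 : ℕ) := by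
    intro c
    have h2 : (w (β c.2) c.1 ^ ((π c).2 : ℕ)).degreeOf p ≤ δ * ((π c).2 : ℕ) := by
      refine (MvPolynomial.degreeOf_pow_le _ _ _).trans ?_
      rw [mul_comm]
      exact Nat.mul_le_mul_right _ (hw c.1 c.2)
    simp only [Sm, Matrix.of_apply, kcoef]
    split_ifs
    · simpa using h2
    · simpa [MvPolynomial.degreeOf_neg] using h2
    · simp
  refine (Finset.sum_le_sum fun c _ => h1 c).trans ?_
  rw [← Finset.mul_sum, Equiv.sum_comp π (fun c : Fin s × Fin t => (c.2 : ℕ)),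
    Fintype.sum_prod_type]
  apply Nat.mul_le_mul_left
  simp only [Finset.sum_const, Finset.card_univ, Fintype.card_fin, smul_eq_mul]
  rw [Fin.sum_univ_eq_sum_range (fun i => i) t, Nat.le_div_iff_mul_le (by norm_num), mul_assoc,
    Finset.sum_range_id_mul_two, mul_assoc]

lemma degreeOf_vand_le {F : Type*} [Field F] (N : ℕ) (p : Fin N) :
    (Matrix.vandermonde (fun i : Fin N => (MvPolynomial.X i : MvPolynomial (Fin N) F))).det.degreeOf p
      ≤ N - 1 := by
  apply degreeOf_det_le
  intro π
  rw [Finset.sum_eq_single (π.symm p)]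
  · rw [Matrix.vandermonde_apply]
    refine (MvPolynomial.degreeOf_pow_le _ _ _).trans ?_
    have := (π.symm p).2
    simp
    omega
  · intro i _ hi
    rw [Matrix.vandermonde_apply]
    have h1 : p ≠ π i := fun h => hi (by rw [h, Equiv.symm_apply_apply])
    have := MvPolynomial.degreeOf_pow_le p (MvPolynomial.X (π i) : MvPolynomial (Fin N) F) i
    rw [MvPolynomial.degreeOf_X, if_neg h1] at this
    omega
  · simp

lemma enum_mem (B : Finset ℕ) (c : ℕ) (hc : c < B.card) : enum B c ∈ B := by
  have h : c < (B.sort (· ≤ ·)).length := by simpa using hc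
  unfold enum
  rw [List.getD_eq_getElem _ _ h]
  exact (Finset.mem_sort (· ≤ ·)).mp (List.getElem_mem h)

lemma enum_inj (B : Finset ℕ) (c c' : ℕ) (hc : c < B.card) (hc' : c' < B.card)
    (he : enum B c = enum B c') : c = c' := by
  have h : c < (B.sort (· ≤ ·)).length := by simpa using hc
  have h' : c' < (B.sort (· ≤ ·)).length := by simpa using hc'
  unfold enum at he
  rw [List.getD_eq_getElem _ _ h, List.getD_eq_getElem _ _ h'] at he
  exact (List.Nodup.getElem_inj_iff (Finset.sort_nodup B (· ≤ ·))).mp he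

/-- The generic parameters. -/
noncomputable def Xlam (F : Type*) [Field F] (N i : ℕ) : MvPolynomial (Fin N) F :=
  if h : i < N then MvPolynomial.X ⟨i, h⟩ else 0

/-- Lemma 3 of the paper, second construction, group size `s+1`: if
`q ≥ ns + Σ_{t=1}^{s+1} C(s+1,t)·s·t·(t−1)/2`, then there exist `ns` pairwise distinct
elements `λ_0, …, λ_{ns−1}` of `F_q` satisfying the local constraints
`det(A_{a,B}) ≠ 0` for all `a ∈ [n/(s+1)]` and all nonempty `B ⊆ [s+1]`. -/
theorem statement3 (F : Type*) [Field F] [Fintype F] (q n k d s ℓ : ℕ)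
    (hq : Fintype.card F = q)
    (hk : 1 ≤ k) (hkn : k < n) (hd₁ : k + 1 ≤ d) (hd₂ : d ≤ n - 1)
    (hs : s = d - k + 1) (hdiv : (s + 1) ∣ n) (hℓ : ℓ = s ^ (n / (s + 1)))
    (hbound : n * s + ∑ t ∈ Finset.Icc 1 (s + 1), (s + 1).choose t * (s * t * (t - 1) / 2) ≤ q) :
    ∃ lam : ℕ → F,
      (∀ i < n * s, ∀ j < n * s, lam i = lam j → i = j) ∧
      LocalConstraints lam s (s + 1) ℓ (n / (s + 1)) := by
  classical
  have hs2 : 2 ≤ s := by omega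
  have hn0 : 0 < n := by omega
  set G := n / (s + 1) with hG
  have hnG : n = (s + 1) * G := (Nat.mul_div_cancel' hdiv).symm
  set N := n * s with hN
  have hN0 : 0 < N := Nat.mul_pos hn0 (by omega)

  have hidx : ∀ a < G, ∀ b < s + 1, ∀ j < s, a * s * (s + 1) + b * s + j < N := by
    intro a ha b hb j hj
    have h1 : (a + 1) * (s * (s + 1)) ≤ G * (s * (s + 1)) := Nat.mul_le_mul_right _ ha
    have h2 : (b + 1) * s ≤ (s + 1) * s := Nat.mul_le_mul_right _ hb
    have h3 : N = G * (s * (s + 1)) := by rw [hN, hnG]; ring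
    rw [h3]
    nlinarith
  have hgrp : ∀ a, ∀ b < s + 1, ∀ j < s, (a * s * (s + 1) + b * s + j) / (s * (s + 1)) = a := by
    intro a b hb j hj
    have h2 : (b + 1) * s ≤ (s + 1) * s := Nat.mul_le_mul_right _ hb
    rw [show a * s * (s + 1) + b * s + j = (b * s + j) + a * (s * (s + 1)) by ring,
      Nat.add_mul_div_right _ _ (by positivity), Nat.div_eq_of_lt (by nlinarith), zero_add]
  let W : ℕ → ℕ → ℕ → MvPolynomial (Fin N) F :=
    fun a b j => Xlam F N (a * s * (s + 1) + b * s + j)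
  let P : ℕ → Finset ℕ → MvPolynomial (Fin N) F :=
    fun a B => (Sm (W a) s B.card (enum B)).det
  let V : MvPolynomial (Fin N) F :=
    (Matrix.vandermonde (fun i : Fin N => (MvPolynomial.X i : MvPolynomial (Fin N) F))).det
  let Q : MvPolynomial (Fin N) F :=
    V * ∏ a ∈ Finset.range G, ∏ B ∈ (Finset.range (s + 1)).powerset, P a B
  have hcardN : N ≤ Fintype.card F := by rw [hq]; exact (Nat.le_add_right _ _).trans hbound
  have hV : V ≠ 0 := by
    apply Matrix.det_vandermonde_ne_zero_iff.mpr
    exact MvPolynomial.X_injective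
  have hP : ∀ a < G, ∀ B ∈ (Finset.range (s + 1)).powerset, P a B ≠ 0 := by
    intro a ha B hB h0
    rw [Finset.mem_powerset] at hB
    obtain ⟨f⟩ : Nonempty (Fin N ↪ F) :=
      Function.Embedding.nonempty_of_card_le (by simpa using hcardN)
    have hsN : s + 1 ≤ N := by
      have := hidx a ha s (by omega) 0 (by omega)
      nlinarith
    let μ : ℕ → F := fun b => if h : b < N then f ⟨b, h⟩ else 0
    let φ : Fin N → F := fun p => μ (((p : ℕ) - a * s * (s + 1)) / s)
    have h1 : (MvPolynomial.eval φ) (P a B) = 0 := by rw [h0, map_zero]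
    simp only [P] at h1
    rw [Sm_map] at h1
    refine Sm_det_ne_zero μ s B.card (enum B) ?_ ?_
    · intro c c' hcc
      have hb := Finset.mem_range.mp (hB (enum_mem B c c.2))
      have hb' := Finset.mem_range.mp (hB (enum_mem B c' c'.2))
      simp only [μ] at hcc
      rw [dif_pos (by omega), dif_pos (by omega)] at hcc
      have := f.injective hcc
      exact Fin.ext (enum_inj B c c' c.2 c'.2 (congrArg Fin.val this))
    · rw [← h1]
      congr 1
      ext r c
      have hb := Finset.mem_range.mp (hB (enum_mem B c.2 c.2.2))
      simp only [Sm, Matrix.of_apply, W, Xlam]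
      rw [dif_pos (hidx a ha _ hb _ c.1.2), MvPolynomial.eval_X]
      simp only [φ]
      congr 3
      rw [add_assoc, Nat.add_sub_cancel_left, add_comm, Nat.add_mul_div_right _ _ (by omega),
        Nat.div_eq_of_lt c.1.2, zero_add]
  have hQ : Q ≠ 0 := by
    apply mul_ne_zero hV
    rw [Finset.prod_ne_zero_iff]
    intro a ha
    rw [Finset.prod_ne_zero_iff]
    intro B hB
    exact hP a (Finset.mem_range.mp ha) B hB
  have hdeg : ∀ p : Fin N, Q.degreeOf p < Fintype.card F := by
    intro p
    have hPd : ∀ a < G, ∀ B ∈ (Finset.range (s + 1)).powerset, (P a B).degreeOf p ≤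
        (if a = (p : ℕ) / (s * (s + 1)) then 1 else 0) * (s * B.card * (B.card - 1) / 2) := by
      intro a ha B hB
      rw [Finset.mem_powerset] at hB
      apply degreeOf_Sm_le
      intro j c
      have hb := Finset.mem_range.mp (hB (enum_mem B c c.2))
      simp only [W, Xlam]
      rw [dif_pos (hidx a ha _ hb _ j.2), MvPolynomial.degreeOf_X]
      by_cases hp : p = ⟨_, hidx a ha _ hb _ j.2⟩
      · have : a = (p : ℕ) / (s * (s + 1)) := by rw [hp]; exact (hgrp a _ hb _ j.2).symm
        rw [if_pos this]
        split_ifs <;> omega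
      · rw [if_neg hp]; exact Nat.zero_le _
    have hsum : ∑ B ∈ (Finset.range (s + 1)).powerset, (s * B.card * (B.card - 1) / 2)
        = ∑ t ∈ Finset.Icc 1 (s + 1), (s + 1).choose t * (s * t * (t - 1) / 2) := by
      rw [Finset.sum_powerset_apply_card (fun t => s * t * (t - 1) / 2), Finset.card_range,
        Finset.sum_range_succ', Finset.range_eq_Ico, Finset.sum_Ico_add' (fun t =>
          (s + 1).choose t • (s * t * (t - 1) / 2))]
      simp only [smul_eq_mul, mul_zero, zero_mul, Nat.zero_div, add_zero, zero_add]
      rfl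
    have h1 : (∏ a ∈ Finset.range G, ∏ B ∈ (Finset.range (s + 1)).powerset, P a B).degreeOf p ≤
        ∑ t ∈ Finset.Icc 1 (s + 1), (s + 1).choose t * (s * t * (t - 1) / 2) := by
      refine (MvPolynomial.degreeOf_prod_le _ _ _).trans ?_
      calc _ ≤ ∑ a ∈ Finset.range G, (if a = (p : ℕ) / (s * (s + 1)) then 1 else 0) *
            ∑ t ∈ Finset.Icc 1 (s + 1), (s + 1).choose t * (s * t * (t - 1) / 2) := by
            apply Finset.sum_le_sum
            intro a ha
            refine (MvPolynomial.degreeOf_prod_le _ _ _).trans ?_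
            rw [← hsum, Finset.mul_sum]
            exact Finset.sum_le_sum fun B hB => hPd a (Finset.mem_range.mp ha) B hB
        _ ≤ _ := by
            rw [← Finset.sum_mul, Finset.sum_ite_eq']
            split_ifs <;> simp
    have h2 := MvPolynomial.degreeOf_mul_le p V
      (∏ a ∈ Finset.range G, ∏ B ∈ (Finset.range (s + 1)).powerset, P a B)
    have h3 : V.degreeOf p ≤ N - 1 := degreeOf_vand_le N p
    have h4 : Q.degreeOf p ≤ V.degreeOf p + _ := h2
    rw [hq]
    omega
  obtain ⟨x, hx⟩ : ∃ x : Fin N → F, MvPolynomial.eval x Q ≠ 0 := by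
    by_contra hcon
    push Not at hcon
    exact hQ (MvPolynomial.eq_zero_of_eval_zero_at_prod_finset Q (fun _ => Finset.univ)
      (by simpa using hdeg) (fun x _ => hcon x))
  simp only [Q, map_mul, map_prod] at hx
  have hx1 := left_ne_zero_of_mul hx
  have hx2 := right_ne_zero_of_mul hx
  refine ⟨fun i => if h : i < N then x ⟨i, h⟩ else 0, ?_, ?_⟩
  · have hxinj : Function.Injective x := by
      rw [← Matrix.det_vandermonde_ne_zero_iff]
      convert hx1 using 1
      simp only [V]
      rw [RingHom.map_det]
      congr 1
      ext i j
      simp [Matrix.vandermonde_apply]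
    intro i hi j hj hij
    simp only [dif_pos hi, dif_pos hj] at hij
    exact congrArg Fin.val (hxinj hij)
  · intro a ha B hB _
    apply big_of_small _ s (s + 1) a G ℓ B hs2 ha hℓ
    have h1 := Finset.prod_ne_zero_iff.mp (Finset.prod_ne_zero_iff.mp hx2 a
      (Finset.mem_range.mpr ha)) B (Finset.mem_powerset.mpr hB)
    simp only [P] at h1
    rw [Sm_map] at h1
    have h2 : (fun b j => (MvPolynomial.eval x) (W a b j)) = fun b j =>
        (fun i => if h : i < N then x ⟨i, h⟩ else 0) (a * s * (s + 1) + b * s + j) := by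
      funext b j
      simp only [W, Xlam]
      split_ifs <;> simp
    rw [h2] at h1
    exact h1
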